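/- For every real α with 0 < |α| < 2, the moment generating function of η_log satisfies ∫_ℝ e^{α·s}·η_log(s) ds = (24/(π²·α·(α+2)))·( 2/α + 2^α·Γ(−α/2)·Γ(1/2)/Γ((1−α)/2) ), where Γ is the real Gamma function. -/

import Mathlib

open MeasureTheory

/-- The limiting density of the logarithm of smallest denominators. -/
noncomputable def etaLog (s : ℝ) : ℝ :=
  if s ≤ 0 then 6 / Real.pi ^ 2 * Real.exp (2 * s)
  else if s ≤ Real.log 2 then 6 / Real.pi ^ 2 * (-Real.exp (2 * s) + 2 + 4 * s)
  else 6 / Real.pi ^ 2 * (-Real.exp (2 * s) + 2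
    + 2 * Real.exp (2 * s) * Real.sqrt (1 / 4 - Real.exp (-2 * s))
    - 4 * Real.log (1 / 2 + Real.sqrt (1 / 4 - Real.exp (-2 * s))))

/-!
Away from its two breakpoints the density satisfies the linear equation
`etaLog'' = 2 * etaLog' + etaLogSource`, and it is continuously differentiable across them. Since
`etaLog` and its derivative are `O(exp (-2 * |s|))`, integrating by parts twice against
`exp (α * s)` produces no boundary terms and multiplies the moment generating function by
`α * (α + 2)`, leaving the transform of the elementary source. The substitution
`t = 4 * exp (-2 * s)` turns the latter into the beta integral with parameters `-α / 2` and `1 / 2`;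
it diverges at `t = 0` when `0 < α`, but subtracting `1` from the factor `(1 - t) ^ (-1 / 2)` makes
it converge, and the subtraction only contributes a rational term.
-/

open Real Set Filter Asymptotics Topology

open ProbabilityTheory (beta)

section Beta

variable {p q : ℝ}

lemma beta_eq_add_div_mul_beta_add_one (hp : p ≠ 0) (q : ℝ) :
    beta p q = (p + q) / p * beta (p + 1) q := by
  simp only [beta, Gamma_add_one hp]
  rcases eq_or_ne (p + q) 0 with hpq | hpq
  · simp [hpq]
  · rw [add_right_comm, Gamma_add_one hpq]
    field_simp

lemma betaIntegrand_eq_ofReal {t : ℝ} (ht : t ∈ Ioo 0 1) (p q : ℝ) :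
    (t : ℂ) ^ ((p : ℂ) - 1) * (1 - (t : ℂ)) ^ ((q : ℂ) - 1) =
      ((t ^ (p - 1) * (1 - t) ^ (q - 1) : ℝ) : ℂ) := by
  rw [Complex.ofReal_mul, Complex.ofReal_cpow ht.1.le, Complex.ofReal_cpow (sub_pos.2 ht.2).le]
  push_cast
  rfl

lemma integrableOn_rpow_mul_one_sub_rpow (hp : 0 < p) (hq : 0 < q) :
    IntegrableOn (fun t : ℝ ↦ t ^ (p - 1) * (1 - t) ^ (q - 1)) (Ioo 0 1) := by
  have hint := Complex.betaIntegral_convergent (u := p) (v := q) (by simpa) (by simpa)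
  rw [intervalIntegrable_iff_integrableOn_Ioo_of_le zero_le_one, integrableOn_congr_fun
    (fun t ht ↦ betaIntegrand_eq_ofReal ht p q) measurableSet_Ioo] at hint
  simpa only [IntegrableOn, RCLike.re_to_complex, Complex.ofReal_re] using hint.re

lemma integral_rpow_mul_one_sub_rpow (hp : 0 < p) (hq : 0 < q) :
    ∫ t in Ioo (0 : ℝ) 1, t ^ (p - 1) * (1 - t) ^ (q - 1) = beta p q := by
  rw [ProbabilityTheory.beta_eq_betaIntegralReal p q hp hq, Complex.betaIntegral,
    intervalIntegral.integral_of_le zero_le_one, integral_Ioc_eq_integral_Ioo,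
    setIntegral_congr_fun measurableSet_Ioo fun t ht ↦ betaIntegrand_eq_ofReal ht p q,
    integral_complex_ofReal, Complex.ofReal_re]

lemma abs_one_sub_rpow_sub_one_le {t : ℝ} (hq : 0 ≤ q) (ht : t ∈ Icc 0 1) :
    |(1 - t) ^ q - 1| ≤ max 1 q * t := by
  obtain ⟨ht0, ht1⟩ := ht
  have hupper : (1 - t) ^ q ≤ 1 := rpow_le_one (by linarith) (by linarith) hq
  rw [abs_of_nonpos (by linarith)]
  rcases le_total q 1 with hq1 | hq1
  · have hlower : (1 - t) ^ (1 : ℝ) ≤ (1 - t) ^ q :=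
      rpow_le_rpow_of_exponent_ge' (by linarith) (by linarith) hq hq1
    rw [rpow_one] at hlower
    rw [max_eq_left hq1]
    linarith
  · have bernoulli := one_add_mul_self_le_rpow_one_add (s := -t) (by linarith) hq1
    rw [← sub_eq_add_neg] at bernoulli
    rw [max_eq_right hq1]
    linarith

lemma one_sub_rpow_sub_one_eq {t : ℝ} (ht : t < 1) (q : ℝ) :
    (1 - t) ^ (q - 1) - 1 = ((1 - t) ^ q - 1) + t * (1 - t) ^ (q - 1) := by
  have : (1 - t) ^ q = (1 - t) ^ (q - 1) * (1 - t) := by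
    rw [← rpow_add_one (by linarith), sub_add_cancel]
  rw [this]
  ring

lemma integrableOn_rpow_mul_one_sub_rpow_sub_one (hp : -1 < p) (hq : 0 < q) :
    IntegrableOn (fun t : ℝ ↦ t ^ (p - 1) * ((1 - t) ^ (q - 1) - 1)) (Ioo 0 1) := by
  have hpow : IntegrableOn (fun t : ℝ ↦ t ^ p) (Ioo 0 1) := by
    rw [← intervalIntegrable_iff_integrableOn_Ioo_of_le zero_le_one]
    exact intervalIntegral.intervalIntegrable_rpow' hp
  have hbeta := integrableOn_rpow_mul_one_sub_rpow (p := p + 1) (by linarith) hq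
  refine ((hpow.const_mul (max 1 q)).add hbeta).mono' ?_ ?_
  · exact (by fun_prop : Measurable fun t : ℝ ↦
      t ^ (p - 1) * ((1 - t) ^ (q - 1) - 1)).aestronglyMeasurable
  filter_upwards [ae_restrict_mem measurableSet_Ioo] with t ⟨ht0, ht1⟩
  have hsplit : t ^ p = t ^ (p - 1) * t := by rw [← rpow_add_one ht0.ne', sub_add_cancel]
  have hpow_nonneg : 0 ≤ t ^ (p - 1) := by positivity
  have hrpow_nonneg : 0 ≤ t * (1 - t) ^ (q - 1) :=
    mul_nonneg ht0.le (rpow_nonneg (by linarith) _)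
  calc ‖t ^ (p - 1) * ((1 - t) ^ (q - 1) - 1)‖
      = t ^ (p - 1) * |((1 - t) ^ q - 1) + t * (1 - t) ^ (q - 1)| := by
        rw [norm_mul, norm_of_nonneg hpow_nonneg, norm_eq_abs, one_sub_rpow_sub_one_eq ht1]
    _ ≤ t ^ (p - 1) * (max 1 q * t + t * (1 - t) ^ (q - 1)) := by
        gcongr
        exact (abs_add_le _ _).trans (add_le_add
          (abs_one_sub_rpow_sub_one_le hq.le ⟨ht0.le, ht1.le⟩) (abs_of_nonneg hrpow_nonneg).le)
    _ = max 1 q * t ^ p + t ^ (p + 1 - 1) * (1 - t) ^ (q - 1) := by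
        rw [add_sub_cancel_right, hsplit]
        ring

lemma continuousOn_rpow_mul_one_sub_rpow_sub_one (hp : -1 < p) (hq : 0 < q) :
    ContinuousOn (fun t : ℝ ↦ t ^ p * ((1 - t) ^ q - 1)) (Icc 0 1) := by
  intro t ht
  have hright : Continuous fun t : ℝ ↦ (1 - t) ^ q - 1 :=
    ((continuous_const.sub continuous_id).rpow_const fun _ ↦ .inr hq.le).sub continuous_const
  rcases ht.1.eq_or_lt with rfl | ht0
  · have hlim : Tendsto (fun t : ℝ ↦ max 1 q * t ^ (p + 1)) (𝓝[Icc 0 1] 0) (𝓝 0) := by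
      have : ContinuousAt (fun t : ℝ ↦ max 1 q * t ^ (p + 1)) 0 :=
        continuousAt_const.mul (continuousAt_rpow_const _ _ (.inr (by linarith)))
      rw [ContinuousAt, zero_rpow (by linarith), mul_zero] at this
      exact this.mono_left nhdsWithin_le_nhds
    simp only [ContinuousWithinAt, sub_zero, one_rpow, sub_self, mul_zero]
    refine squeeze_zero_norm' ?_ hlim
    filter_upwards [self_mem_nhdsWithin] with t ht
    rcases ht.1.eq_or_lt with rfl | ht0
    · simp [zero_rpow (by linarith : p + 1 ≠ 0)]
    · rw [norm_mul, norm_of_nonneg (rpow_nonneg ht.1 p), norm_eq_abs, rpow_add_one ht0.ne',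
        mul_left_comm]
      exact mul_le_mul_of_nonneg_left (abs_one_sub_rpow_sub_one_le hq.le ht) (rpow_nonneg ht.1 p)
  · exact ((continuousAt_rpow_const _ _ (.inl ht0.ne')).mul hright.continuousAt).continuousWithinAt

lemma hasDerivAt_rpow_mul_one_sub_rpow_sub_one {t : ℝ} (hp : p ≠ 0) (ht : t ∈ Ioo 0 1) (q : ℝ) :
    HasDerivAt (fun t ↦ t ^ p * ((1 - t) ^ q - 1) / p)
      (t ^ (p - 1) * ((1 - t) ^ (q - 1) - 1) -
        (p + q) / p * (t ^ (p + 1 - 1) * (1 - t) ^ (q - 1))) t := by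
  obtain ⟨ht0, ht1⟩ := ht
  have hleft := hasDerivAt_rpow_const (p := p) (.inl ht0.ne')
  have hright := (((hasDerivAt_id t).const_sub 1).rpow_const (p := q)
    (.inl (sub_pos.2 ht1).ne')).sub_const 1
  refine ((hleft.mul hright).div_const p).congr_deriv ?_
  have hsplit : t ^ p = t ^ (p - 1) * t := by rw [← rpow_add_one ht0.ne', sub_add_cancel]
  rw [one_sub_rpow_sub_one_eq ht1, add_sub_cancel_right, hsplit]
  simp only [id]
  field_simp
  ring

theorem integral_rpow_mul_one_sub_rpow_sub_one (hp : -1 < p) (hp0 : p ≠ 0) (hq : 0 < q) :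
    ∫ t in Ioo (0 : ℝ) 1, t ^ (p - 1) * ((1 - t) ^ (q - 1) - 1) = beta p q - 1 / p := by
  have hreg := integrableOn_rpow_mul_one_sub_rpow_sub_one hp hq
  have hbeta := (integrableOn_rpow_mul_one_sub_rpow (p := p + 1) (by linarith) hq).const_mul
    ((p + q) / p)
  have hftc := intervalIntegral.integral_eq_sub_of_hasDerivAt_of_le zero_le_one
    ((continuousOn_rpow_mul_one_sub_rpow_sub_one hp hq).div_const p)
    (fun t ht ↦ hasDerivAt_rpow_mul_one_sub_rpow_sub_one hp0 ht q)
    ((intervalIntegrable_iff_integrableOn_Ioo_of_le zero_le_one).2 (hreg.sub hbeta))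
  rw [intervalIntegral.integral_of_le zero_le_one, integral_Ioc_eq_integral_Ioo,
    integral_sub hreg hbeta, integral_const_mul,
    integral_rpow_mul_one_sub_rpow (by linarith) hq,
    ← beta_eq_add_div_mul_beta_add_one hp0] at hftc
  simp only [sub_self, zero_rpow hq.ne', one_rpow, sub_zero, mul_zero, zero_div, zero_sub,
    one_mul] at hftc
  linear_combination hftc

end Beta

section ExponentialSubstitution

variable {k : ℝ}

lemma image_exp_neg_mul_sub_Ioi (hk : 0 < k) (a : ℝ) :
    (fun s ↦ exp (-k * (s - a))) '' Ioi a = Ioo 0 1 := by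
  ext t
  refine ⟨?_, fun ⟨ht0, ht1⟩ ↦ ⟨a - log t / k, ?_, ?_⟩⟩
  · rintro ⟨s, hs, rfl⟩
    exact ⟨exp_pos _, exp_lt_one_iff.2 (mul_neg_of_neg_of_pos (neg_lt_zero.2 hk) (sub_pos.2 hs))⟩
  · have := div_neg_of_neg_of_pos (log_neg ht0 ht1) hk
    exact mem_Ioi.2 (by linarith)
  · have : -k * (a - log t / k - a) = log t := by field_simp; ring
    simp only [this, exp_log ht0]

lemma hasDerivAt_exp_neg_mul_sub (k a s : ℝ) :
    HasDerivAt (fun s ↦ exp (-k * (s - a))) (-k * exp (-k * (s - a))) s :=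
  (((hasDerivAt_id s).sub_const a).const_mul (-k)).exp.congr_deriv (by simp [mul_comm])

lemma antitone_exp_neg_mul_sub (hk : 0 < k) (a : ℝ) : Antitone fun s ↦ exp (-k * (s - a)) :=
  fun s t hst ↦ exp_le_exp.2 (by nlinarith)

lemma neg_deriv_smul_rpow_comp_exp_neg_mul_sub (hk : 0 < k) (α a s : ℝ) (f : ℝ → ℝ) :
    (-(-k * exp (-k * (s - a)))) •
        (exp (-k * (s - a)) ^ (-α / k - 1) * f (exp (-k * (s - a)))) =
      k / exp (α * a) * (exp (α * s) * f (exp (-k * (s - a)))) := by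
  have hpow : exp (-k * (s - a)) * exp (-k * (s - a)) ^ (-α / k - 1) =
      exp (α * s) / exp (α * a) := by
    rw [← exp_mul, ← exp_add, ← exp_sub]
    congr 1
    field_simp
    ring
  rw [smul_eq_mul]
  linear_combination k * f (exp (-k * (s - a))) * hpow

lemma integrableOn_Ioi_exp_mul_comp_exp_iff (hk : 0 < k) (α a : ℝ) (f : ℝ → ℝ) :
    IntegrableOn (fun s ↦ exp (α * s) * f (exp (-k * (s - a)))) (Ioi a) ↔
      IntegrableOn (fun t ↦ t ^ (-α / k - 1) * f t) (Ioo 0 1) := by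
  rw [← image_exp_neg_mul_sub_Ioi hk a,
    integrableOn_image_iff_integrableOn_deriv_smul_of_antitoneOn measurableSet_Ioi
      (fun s _ ↦ (hasDerivAt_exp_neg_mul_sub k a s).hasDerivWithinAt)
      ((antitone_exp_neg_mul_sub hk a).antitoneOn _)]
  simp_rw [neg_deriv_smul_rpow_comp_exp_neg_mul_sub hk]
  exact (integrable_const_mul_iff (IsUnit.mk0 _ (by positivity)) _).symm

lemma integral_Ioi_exp_mul_comp_exp (hk : 0 < k) (α a : ℝ) (f : ℝ → ℝ) :
    ∫ s in Ioi a, exp (α * s) * f (exp (-k * (s - a))) =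
      exp (α * a) / k * ∫ t in Ioo (0 : ℝ) 1, t ^ (-α / k - 1) * f t := by
  rw [← image_exp_neg_mul_sub_Ioi hk a,
    integral_image_eq_integral_deriv_smul_of_antitoneOn measurableSet_Ioi
      (fun s _ ↦ (hasDerivAt_exp_neg_mul_sub k a s).hasDerivWithinAt)
      ((antitone_exp_neg_mul_sub hk a).antitoneOn _)]
  simp_rw [neg_deriv_smul_rpow_comp_exp_neg_mul_sub hk]
  rw [integral_const_mul]
  field_simp

end ExponentialSubstitution

section ExponentialDecay

variable {f : ℝ → ℝ} {α a b : ℝ}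

lemma isBigO_exp_mul_mul {l : Filter ℝ} {c : ℝ} (hf : f =O[l] fun s ↦ exp (c * s)) (α : ℝ) :
    (fun s ↦ exp (α * s) * f s) =O[l] fun s ↦ exp ((α + c) * s) := by
  simp_rw [add_mul, exp_add]
  exact (isBigO_refl _ l).mul hf

lemma integrable_exp_mul_of_isBigO (hf : Continuous f) (hbot : f =O[atBot] fun s ↦ exp (a * s))
    (htop : f =O[atTop] fun s ↦ exp (b * s)) (ha : 0 < α + a) (hb : α + b < 0) :
    Integrable fun s ↦ exp (α * s) * f s :=
  ((by fun_prop : Continuous fun s ↦ exp (α * s) * f s).locallyIntegrable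
    ).integrable_of_isBigO_atBot_atTop
    (isBigO_exp_mul_mul hbot α) ⟨Iic 0, Iic_mem_atBot 0, integrableOn_exp_mul_Iic ha 0⟩
    (isBigO_exp_mul_mul htop α) ⟨Ioi 0, Ioi_mem_atTop 0, integrableOn_exp_mul_Ioi hb 0⟩

lemma tendsto_exp_mul_atBot_of_isBigO (hf : f =O[atBot] fun s ↦ exp (a * s)) (ha : 0 < α + a) :
    Tendsto (fun s ↦ exp (α * s) * f s) atBot (𝓝 0) :=
  (isBigO_exp_mul_mul hf α).trans_tendsto
    (tendsto_exp_atBot.comp (tendsto_id.const_mul_atBot ha))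

lemma tendsto_exp_mul_atTop_of_isBigO (hf : f =O[atTop] fun s ↦ exp (b * s)) (hb : α + b < 0) :
    Tendsto (fun s ↦ exp (α * s) * f s) atTop (𝓝 0) :=
  (isBigO_exp_mul_mul hf α).trans_tendsto
    (tendsto_exp_atBot.comp (tendsto_id.const_mul_atTop_of_neg hb))

end ExponentialDecay

section IntegrationByParts

lemma hasDerivAt_exp_const_mul (c s : ℝ) :
    HasDerivAt (fun s ↦ exp (c * s)) (c * exp (c * s)) s := by
  simpa [mul_comm] using ((hasDerivAt_id s).const_mul c).exp

lemma integral_of_hasDerivAt_off_countable_of_tendsto {E : Type*} [NormedAddCommGroup E]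
    [NormedSpace ℝ E] [CompleteSpace E] {f f' : ℝ → E} {m n : E} {S : Set ℝ} (hS : S.Countable)
    (hf : Continuous f) (hderiv : ∀ s ∉ S, HasDerivAt f (f' s) s) (hint : Integrable f')
    (hbot : Tendsto f atBot (𝓝 m)) (htop : Tendsto f atTop (𝓝 n)) : ∫ s, f' s = n - m := by
  have hftc (t : ℝ) : ∫ s in -t..t, f' s = f t - f (-t) :=
    integral_eq_of_hasDerivAt_off_countable f f' hS hf.continuousOn
      (fun s hs ↦ hderiv s hs.2) hint.intervalIntegrable
  refine tendsto_nhds_unique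
    (intervalIntegral_tendsto_integral hint tendsto_neg_atTop_atBot tendsto_id) ?_
  exact (htop.sub (hbot.comp tendsto_neg_atTop_atBot)).congr fun t ↦ (hftc t).symm

theorem integral_exp_mul_of_hasDerivAt_hasDerivAt {f f' g : ℝ → ℝ} {S : Set ℝ} {α a b c : ℝ}
    (hS : S.Countable) (hf : Continuous f) (hf' : Continuous f')
    (hderiv : ∀ s ∉ S, HasDerivAt f (f' s) s)
    (hderiv' : ∀ s ∉ S, HasDerivAt f' (c * f' s + g s) s)
    (hfbot : f =O[atBot] fun s ↦ exp (a * s)) (hf'bot : f' =O[atBot] fun s ↦ exp (a * s))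
    (hftop : f =O[atTop] fun s ↦ exp (b * s)) (hf'top : f' =O[atTop] fun s ↦ exp (b * s))
    (ha : 0 < α + a) (hb : α + b < 0) (hg : Integrable fun s ↦ exp (α * s) * g s) :
    ∫ s, exp (α * s) * g s = α * (α + c) * ∫ s, exp (α * s) * f s := by
  have hint := (integrable_exp_mul_of_isBigO hf hfbot hftop ha hb).const_mul (α * (α + c))
  let F : ℝ → ℝ := fun s ↦ exp (α * s) * (f' s - (α + c) * f s)
  have hF : ∀ s ∉ S, HasDerivAt F (exp (α * s) * g s - α * (α + c) * (exp (α * s) * f s)) s := by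
    intro s hs
    refine ((hasDerivAt_exp_const_mul α s).mul ((hderiv' s hs).sub
      ((hderiv s hs).const_mul (α + c)))).congr_deriv ?_
    simp only [Pi.sub_apply]
    ring
  have hzero := integral_of_hasDerivAt_off_countable_of_tendsto hS (by fun_prop) hF (hg.sub hint)
    (tendsto_exp_mul_atBot_of_isBigO (hf'bot.sub (hfbot.const_mul_left _)) ha)
    (tendsto_exp_mul_atTop_of_isBigO (hf'top.sub (hftop.const_mul_left _)) hb)
  rwa [integral_sub hg hint, integral_const_mul, sub_self, sub_eq_zero] at hzero

end IntegrationByParts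

lemma lt_or_mem_Ioo_or_lt_of_notMem_pair {ι : Type*} [LinearOrder ι] {a b s : ι}
    (hs : s ∉ ({a, b} : Set ι)) :
    s < a ∨ s ∈ Ioo a b ∨ b < s := by
  grind

section EtaLogRoot

lemma exp_two_mul_log_two : exp (2 * log 2) = 4 := by
  rw [two_mul, exp_add, exp_log two_pos]
  norm_num

lemma four_mul_exp_neg_two_mul (s : ℝ) : 4 * exp (-2 * s) = exp (-2 * (s - log 2)) := by
  rw [← exp_two_mul_log_two, ← exp_add]
  ring_nf

lemma exp_neg_two_mul_le_quarter {s : ℝ} (hs : log 2 ≤ s) : exp (-2 * s) ≤ 1 / 4 := by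
  have : exp (-2 * (s - log 2)) ≤ 1 := exp_le_one_iff.2 (by linarith)
  linarith [four_mul_exp_neg_two_mul s]

lemma exp_neg_two_mul_lt_quarter {s : ℝ} (hs : log 2 < s) : exp (-2 * s) < 1 / 4 := by
  have : exp (-2 * (s - log 2)) < 1 := exp_lt_one_iff.2 (by linarith)
  linarith [four_mul_exp_neg_two_mul s]

/-- For `s ≥ log 2`, the larger root `w` of `w * (1 - w) = exp (-2 * s)`; it makes the last branch
of `etaLog` a function of `w` alone. For `s < log 2` it has the junk value `1 / 2`. -/
noncomputable def etaLogRoot (s : ℝ) : ℝ := 1 / 2 + √(1 / 4 - exp (-2 * s))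

lemma half_le_etaLogRoot (s : ℝ) : 1 / 2 ≤ etaLogRoot s :=
  le_add_of_nonneg_right (sqrt_nonneg _)

lemma half_lt_etaLogRoot {s : ℝ} (hs : log 2 < s) : 1 / 2 < etaLogRoot s :=
  lt_add_of_pos_right _ (sqrt_pos.2 (sub_pos.2 (exp_neg_two_mul_lt_quarter hs)))

lemma etaLogRoot_pos (s : ℝ) : 0 < etaLogRoot s :=
  one_half_pos.trans_le (half_le_etaLogRoot s)

lemma etaLogRoot_log_two : etaLogRoot (log 2) = 1 / 2 := by
  have hquarter : exp (-2 * log 2) = 1 / 4 := by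
    rw [neg_mul, exp_neg, exp_two_mul_log_two, one_div]
  rw [etaLogRoot, hquarter, sub_self, sqrt_zero, add_zero]

lemma etaLogRoot_mul_one_sub {s : ℝ} (hs : log 2 ≤ s) :
    etaLogRoot s * (1 - etaLogRoot s) = exp (-2 * s) := by
  have hsq := sq_sqrt (sub_nonneg.2 (exp_neg_two_mul_le_quarter hs))
  rw [etaLogRoot]
  linear_combination -hsq

lemma etaLogRoot_lt_one (s : ℝ) : etaLogRoot s < 1 := by
  have hsqrt : √(1 / 4 - exp (-2 * s)) < 1 / 2 :=
    (sqrt_lt' one_half_pos).2 (by linarith [exp_pos (-2 * s)])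
  rw [etaLogRoot]
  linarith

lemma exp_two_mul_mul_one_sub_etaLogRoot {s : ℝ} (hs : log 2 ≤ s) :
    exp (2 * s) * (1 - etaLogRoot s) = (etaLogRoot s)⁻¹ := by
  have hexp : exp (2 * s) * exp (-2 * s) = 1 := by rw [← exp_add]; simp
  rw [← etaLogRoot_mul_one_sub hs] at hexp
  exact eq_inv_of_mul_eq_one_left (by linear_combination hexp)

lemma sqrt_one_sub_four_mul_exp (s : ℝ) : √(1 - 4 * exp (-2 * s)) = 2 * etaLogRoot s - 1 := by
  rw [show 1 - 4 * exp (-2 * s) = 2 ^ 2 * (1 / 4 - exp (-2 * s)) by ring,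
    sqrt_mul (by positivity), sqrt_sq two_pos.le, etaLogRoot]
  ring

lemma inv_etaLogRoot_sub_one_le {s : ℝ} (hs : log 2 ≤ s) :
    (etaLogRoot s)⁻¹ - 1 ≤ 4 * exp (-2 * s) := by
  have hw := etaLogRoot_pos s
  have hinv : (etaLogRoot s)⁻¹ ≤ 2 := by
    simpa using inv_anti₀ one_half_pos (half_le_etaLogRoot s)
  calc (etaLogRoot s)⁻¹ - 1 = exp (-2 * s) * (etaLogRoot s)⁻¹ ^ 2 := by
        rw [← etaLogRoot_mul_one_sub hs]
        field_simp
    _ ≤ exp (-2 * s) * 2 ^ 2 := by gcongr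
    _ = 4 * exp (-2 * s) := by ring

lemma continuous_etaLogRoot : Continuous etaLogRoot := by
  unfold etaLogRoot
  fun_prop

lemma hasDerivAt_etaLogRoot {s : ℝ} (hs : log 2 < s) :
    HasDerivAt etaLogRoot
      (2 * etaLogRoot s * (1 - etaLogRoot s) / (2 * etaLogRoot s - 1)) s := by
  have hroot : 2 * etaLogRoot s - 1 = 2 * √(1 / 4 - exp (-2 * s)) := by rw [etaLogRoot]; ring
  have hderiv := (((hasDerivAt_exp_const_mul (-2) s).const_sub (1 / 4)).sqrt
    (sub_pos.2 (exp_neg_two_mul_lt_quarter hs)).ne').const_add (1 / 2)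
  refine hderiv.congr_deriv ?_
  rw [hroot, mul_assoc, etaLogRoot_mul_one_sub hs.le, neg_mul, neg_neg]

end EtaLogRoot

section EtaLog

lemma log_two_pos : 0 < log 2 := log_pos one_lt_two

lemma etaLog_of_nonpos {s : ℝ} (hs : s ≤ 0) : etaLog s = 6 / π ^ 2 * exp (2 * s) :=
  if_pos hs

lemma etaLog_of_mem_Ioc {s : ℝ} (hs : s ∈ Ioc 0 (log 2)) :
    etaLog s = 6 / π ^ 2 * (-exp (2 * s) + 2 + 4 * s) := by
  rw [etaLog, if_neg hs.1.not_ge, if_pos hs.2]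

lemma etaLog_of_log_two_lt {s : ℝ} (hs : log 2 < s) :
    etaLog s = 6 / π ^ 2 * (2 - 2 * (etaLogRoot s)⁻¹ - 4 * log (etaLogRoot s)) := by
  rw [etaLog, if_neg (log_two_pos.trans hs).not_ge, if_neg hs.not_ge, ← etaLogRoot,
    ← exp_two_mul_mul_one_sub_etaLogRoot hs.le, etaLogRoot]
  ring

/-- The derivative of `etaLog` away from the breakpoints `0` and `log 2` of its definition. -/
noncomputable def etaLogDeriv (s : ℝ) : ℝ :=
  if s ≤ 0 then 6 / π ^ 2 * (2 * exp (2 * s))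
  else if s ≤ log 2 then 6 / π ^ 2 * (4 - 2 * exp (2 * s))
  else 6 / π ^ 2 * (4 - 4 * (etaLogRoot s)⁻¹)

lemma etaLogDeriv_of_nonpos {s : ℝ} (hs : s ≤ 0) :
    etaLogDeriv s = 6 / π ^ 2 * (2 * exp (2 * s)) :=
  if_pos hs

lemma etaLogDeriv_of_mem_Ioc {s : ℝ} (hs : s ∈ Ioc 0 (log 2)) :
    etaLogDeriv s = 6 / π ^ 2 * (4 - 2 * exp (2 * s)) := by
  rw [etaLogDeriv, if_neg hs.1.not_ge, if_pos hs.2]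

lemma etaLogDeriv_of_log_two_lt {s : ℝ} (hs : log 2 < s) :
    etaLogDeriv s = 6 / π ^ 2 * (4 - 4 * (etaLogRoot s)⁻¹) := by
  rw [etaLogDeriv, if_neg (log_two_pos.trans hs).not_ge, if_neg hs.not_ge]

/-- The source term of the equation `etaLog'' = 2 * etaLog' + etaLogSource`, namely
`48 / π ^ 2 * ((1 - 4 * exp (-2 * s)) ^ (-1 / 2) - 1)` for `s > 0` with the power read as `0` where
its base is negative. The constant `1` is grouped with the power on `s > log 2` so that each
indicator remains integrable against `exp (α * s)` when `0 < α < 2`. -/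
noncomputable def etaLogSource (s : ℝ) : ℝ :=
  48 / π ^ 2 *
    ((Ioi (log 2)).indicator (fun s ↦ (1 - 4 * exp (-2 * s)) ^ (1 / 2 - 1 : ℝ) - 1) s -
      (Ioc 0 (log 2)).indicator 1 s)

lemma etaLogSource_of_nonpos {s : ℝ} (hs : s ≤ 0) : etaLogSource s = 0 := by
  simp [etaLogSource, hs.not_gt, (hs.trans log_two_pos.le).not_gt]

lemma etaLogSource_of_mem_Ioc {s : ℝ} (hs : s ∈ Ioc 0 (log 2)) :
    etaLogSource s = -(48 / π ^ 2) := by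
  simp [etaLogSource, hs.1, hs.2, hs.2.not_gt]

lemma etaLogSource_of_log_two_lt {s : ℝ} (hs : log 2 < s) :
    etaLogSource s = 48 / π ^ 2 * ((2 * etaLogRoot s - 1)⁻¹ - 1) := by
  have hpos : 0 ≤ 1 - 4 * exp (-2 * s) := by linarith [exp_neg_two_mul_lt_quarter hs]
  have hpow : (1 - 4 * exp (-2 * s)) ^ (1 / 2 - 1 : ℝ) = (2 * etaLogRoot s - 1)⁻¹ := by
    rw [← sqrt_one_sub_four_mul_exp, sqrt_eq_rpow, ← rpow_neg hpos]
    norm_num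
  rw [etaLogSource, indicator_of_mem (mem_Ioi.2 hs), hpow,
    indicator_of_notMem fun h ↦ hs.not_ge h.2, sub_zero]

lemma continuous_etaLog : Continuous etaLog := by
  have hroot : ∀ s : ℝ, 1 / 2 + √(1 / 4 - exp (-2 * s)) ≠ 0 := fun s ↦ (etaLogRoot_pos s).ne'
  refine Continuous.if_le (by fun_prop) (Continuous.if_le (by fun_prop)
    (by fun_prop (disch := assumption)) continuous_id continuous_const ?_)
    continuous_id continuous_const ?_
  · rintro s rfl
    have hsqrt : √(1 / 4 - exp (-2 * log 2)) = 0 := left_eq_add.1 etaLogRoot_log_two.symm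
    rw [hsqrt, mul_zero, add_zero, add_zero, one_div, log_inv]
    ring
  · rintro s rfl
    norm_num [log_two_pos.le]

lemma continuous_etaLogDeriv : Continuous etaLogDeriv := by
  have hinv : Continuous fun s ↦ (etaLogRoot s)⁻¹ :=
    continuous_etaLogRoot.inv₀ fun s ↦ (etaLogRoot_pos s).ne'
  refine Continuous.if_le (by fun_prop) (Continuous.if_le (by fun_prop) (by fun_prop)
    continuous_id continuous_const ?_) continuous_id continuous_const ?_
  · rintro s rfl
    rw [etaLogRoot_log_two, exp_two_mul_log_two]
    norm_num
  · rintro s rfl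
    norm_num [log_two_pos.le]

lemma hasDerivAt_etaLog {s : ℝ} (hs : s ∉ ({0, log 2} : Set ℝ)) :
    HasDerivAt etaLog (etaLogDeriv s) s := by
  have hexp := hasDerivAt_exp_const_mul 2 s
  rcases lt_or_mem_Ioo_or_lt_of_notMem_pair hs with hs | hs | hs
  · rw [etaLogDeriv_of_nonpos hs.le]
    exact (hexp.const_mul _).congr_of_eventuallyEq
      (eventually_of_mem (Iio_mem_nhds hs) fun t ht ↦ etaLog_of_nonpos (le_of_lt ht))
  · rw [etaLogDeriv_of_mem_Ioc (Ioo_subset_Ioc_self hs)]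
    refine HasDerivAt.congr_of_eventuallyEq ?_ (eventually_of_mem (Ioo_mem_nhds hs.1 hs.2)
      fun t ht ↦ etaLog_of_mem_Ioc (Ioo_subset_Ioc_self ht))
    refine (((hexp.neg.add_const 2).add ((hasDerivAt_id s).const_mul 4)).const_mul _).congr_deriv ?_
    ring
  · rw [etaLogDeriv_of_log_two_lt hs]
    have hw := (etaLogRoot_pos s).ne'
    have hroot := hasDerivAt_etaLogRoot hs
    have hden : 2 * etaLogRoot s - 1 ≠ 0 := by linarith [half_lt_etaLogRoot hs]
    refine HasDerivAt.congr_of_eventuallyEq ?_ (eventually_of_mem (Ioi_mem_nhds hs)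
      fun t ↦ etaLog_of_log_two_lt)
    refine (((((hroot.inv hw).const_mul 2).const_sub 2).sub ((hroot.log hw).const_mul 4)).const_mul
      _).congr_deriv ?_
    field_simp
    ring

lemma hasDerivAt_etaLogDeriv {s : ℝ} (hs : s ∉ ({0, log 2} : Set ℝ)) :
    HasDerivAt etaLogDeriv (2 * etaLogDeriv s + etaLogSource s) s := by
  have hexp := (hasDerivAt_exp_const_mul 2 s).const_mul 2
  rcases lt_or_mem_Ioo_or_lt_of_notMem_pair hs with hs | hs | hs
  · rw [etaLogDeriv_of_nonpos hs.le, etaLogSource_of_nonpos hs.le]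
    refine HasDerivAt.congr_of_eventuallyEq ?_ (eventually_of_mem (Iio_mem_nhds hs)
      fun t ht ↦ etaLogDeriv_of_nonpos (le_of_lt ht))
    exact (hexp.const_mul _).congr_deriv (by ring)
  · have hs' := Ioo_subset_Ioc_self hs
    rw [etaLogDeriv_of_mem_Ioc hs', etaLogSource_of_mem_Ioc hs']
    refine HasDerivAt.congr_of_eventuallyEq ?_ (eventually_of_mem (Ioo_mem_nhds hs.1 hs.2)
      fun t ht ↦ etaLogDeriv_of_mem_Ioc (Ioo_subset_Ioc_self ht))
    exact ((hexp.const_sub 4).const_mul _).congr_deriv (by ring)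
  · rw [etaLogDeriv_of_log_two_lt hs, etaLogSource_of_log_two_lt hs]
    have hw := (etaLogRoot_pos s).ne'
    have hroot := hasDerivAt_etaLogRoot hs
    have hden : 2 * etaLogRoot s - 1 ≠ 0 := by linarith [half_lt_etaLogRoot hs]
    refine HasDerivAt.congr_of_eventuallyEq ?_ (eventually_of_mem (Ioi_mem_nhds hs)
      fun t ↦ etaLogDeriv_of_log_two_lt)
    refine (((hroot.inv hw).const_mul 4).const_sub 4 |>.const_mul _).congr_deriv ?_
    field_simp
    ring

lemma etaLog_isBigO_atBot : etaLog =O[atBot] fun s ↦ exp (2 * s) :=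
  ((isBigO_refl _ _).const_mul_left _).congr'
    (eventually_of_mem (Iic_mem_atBot 0) fun _ hs ↦ (etaLog_of_nonpos hs).symm) .rfl

lemma etaLogDeriv_isBigO_atBot : etaLogDeriv =O[atBot] fun s ↦ exp (2 * s) :=
  (((isBigO_refl _ _).const_mul_left _).const_mul_left _).congr'
    (eventually_of_mem (Iic_mem_atBot 0) fun _ hs ↦ (etaLogDeriv_of_nonpos hs).symm) .rfl

lemma inv_etaLogRoot_sub_one_isBigO_atTop :
    (fun s ↦ (etaLogRoot s)⁻¹ - 1) =O[atTop] fun s ↦ exp (-2 * s) := by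
  refine IsBigO.of_bound 4 (eventually_of_mem (Ioi_mem_atTop (log 2)) fun s hs ↦ ?_)
  have hone := (one_le_inv₀ (etaLogRoot_pos s)).2 (etaLogRoot_lt_one s).le
  rw [norm_of_nonneg (sub_nonneg.2 hone), norm_of_nonneg (exp_pos _).le]
  exact inv_etaLogRoot_sub_one_le (le_of_lt hs)

lemma log_etaLogRoot_isBigO_atTop :
    (fun s ↦ log (etaLogRoot s)) =O[atTop] fun s ↦ exp (-2 * s) := by
  refine IsBigO.trans (isBigO_of_le _ fun s ↦ ?_) inv_etaLogRoot_sub_one_isBigO_atTop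
  have hw := etaLogRoot_pos s
  have hlog := log_nonpos hw.le (etaLogRoot_lt_one s).le
  have hlog' := one_sub_inv_le_log_of_pos hw
  rw [norm_of_nonpos hlog, norm_of_nonneg (by linarith)]
  linarith

lemma etaLog_isBigO_atTop : etaLog =O[atTop] fun s ↦ exp (-2 * s) := by
  refine (((inv_etaLogRoot_sub_one_isBigO_atTop.const_mul_left (-2)).sub
    (log_etaLogRoot_isBigO_atTop.const_mul_left 4)).const_mul_left (6 / π ^ 2)).congr'
    (eventually_of_mem (Ioi_mem_atTop (log 2)) fun s hs ↦ ?_) .rfl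
  rw [etaLog_of_log_two_lt hs]
  ring

lemma etaLogDeriv_isBigO_atTop : etaLogDeriv =O[atTop] fun s ↦ exp (-2 * s) := by
  refine ((inv_etaLogRoot_sub_one_isBigO_atTop.const_mul_left (-4)).const_mul_left
    (6 / π ^ 2)).congr' (eventually_of_mem (Ioi_mem_atTop (log 2)) fun s hs ↦ ?_) .rfl
  rw [etaLogDeriv_of_log_two_lt hs]
  ring

end EtaLog

section SourceTransform

variable {α : ℝ}

lemma integrableOn_exp_mul_one_sub_four_mul_exp_rpow_sub_one (hα : α < 2) :
    IntegrableOn (fun s ↦ exp (α * s) * ((1 - 4 * exp (-2 * s)) ^ (1 / 2 - 1 : ℝ) - 1))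
      (Ioi (log 2)) := by
  simp_rw [four_mul_exp_neg_two_mul]
  exact (integrableOn_Ioi_exp_mul_comp_exp_iff two_pos α (log 2)
    fun t ↦ (1 - t) ^ (1 / 2 - 1 : ℝ) - 1).2
    (integrableOn_rpow_mul_one_sub_rpow_sub_one (by linarith) one_half_pos)

lemma integral_exp_mul_one_sub_four_mul_exp_rpow_sub_one (hα : α < 2) (hα0 : α ≠ 0) :
    ∫ s in Ioi (log 2), exp (α * s) * ((1 - 4 * exp (-2 * s)) ^ (1 / 2 - 1 : ℝ) - 1) =
      2 ^ α * (beta (-α / 2) (1 / 2) / 2 + 1 / α) := by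
  simp_rw [four_mul_exp_neg_two_mul]
  rw [integral_Ioi_exp_mul_comp_exp two_pos α (log 2) fun t ↦ (1 - t) ^ (1 / 2 - 1 : ℝ) - 1,
    integral_rpow_mul_one_sub_rpow_sub_one (by linarith) (by simpa using hα0) one_half_pos,
    mul_comm α, ← rpow_def_of_pos two_pos]
  field_simp
  ring

lemma integrableOn_Ioc_exp_mul (α a b : ℝ) : IntegrableOn (fun s ↦ exp (α * s)) (Ioc a b) :=
  (by fun_prop : Continuous fun s ↦ exp (α * s)).integrableOn_Ioc

lemma integral_Ioc_exp_mul (hα0 : α ≠ 0) {a b : ℝ} (hab : a ≤ b) :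
    ∫ s in Ioc a b, exp (α * s) = (exp (α * b) - exp (α * a)) / α := by
  rw [← intervalIntegral.integral_of_le hab, intervalIntegral.integral_comp_mul_left exp hα0,
    integral_exp, smul_eq_mul, inv_mul_eq_div]

lemma exp_mul_etaLogSource (α s : ℝ) :
    exp (α * s) * etaLogSource s = 48 / π ^ 2 *
      ((Ioi (log 2)).indicator
          (fun s ↦ exp (α * s) * ((1 - 4 * exp (-2 * s)) ^ (1 / 2 - 1 : ℝ) - 1)) s -
        (Ioc 0 (log 2)).indicator (fun s ↦ exp (α * s)) s) := by
  have hone := indicator_mul_right (Ioc 0 (log 2)) (fun s ↦ exp (α * s)) (1 : ℝ → ℝ) (i := s)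
  simp only [Pi.one_apply, mul_one] at hone
  rw [indicator_mul_right, hone, etaLogSource]
  ring

lemma integrable_exp_mul_etaLogSource (hα : α < 2) :
    Integrable fun s ↦ exp (α * s) * etaLogSource s := by
  simp_rw [exp_mul_etaLogSource]
  exact (((integrableOn_exp_mul_one_sub_four_mul_exp_rpow_sub_one hα).integrable_indicator
    measurableSet_Ioi).sub
      ((integrableOn_Ioc_exp_mul α 0 (log 2)).integrable_indicator measurableSet_Ioc)).const_mul _

theorem integral_exp_mul_etaLogSource (hα : α < 2) (hα0 : α ≠ 0) :
    ∫ s, exp (α * s) * etaLogSource s =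
      24 / π ^ 2 * (2 / α + 2 ^ α * beta (-α / 2) (1 / 2)) := by
  simp_rw [exp_mul_etaLogSource]
  rw [integral_const_mul, integral_sub
      ((integrableOn_exp_mul_one_sub_four_mul_exp_rpow_sub_one hα).integrable_indicator
        measurableSet_Ioi)
      ((integrableOn_Ioc_exp_mul α 0 (log 2)).integrable_indicator measurableSet_Ioc),
    integral_indicator measurableSet_Ioi, integral_indicator measurableSet_Ioc,
    integral_exp_mul_one_sub_four_mul_exp_rpow_sub_one hα hα0,
    integral_Ioc_exp_mul hα0 log_two_pos.le, mul_zero, exp_zero, mul_comm α (log 2),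
    ← rpow_def_of_pos two_pos]
  field_simp
  ring

end SourceTransform

theorem etaLog_moment_generating_function (α : ℝ) (hα : 0 < |α|) (hα2 : |α| < 2) :
    (∫ s : ℝ, Real.exp (α * s) * etaLog s) =
      24 / (Real.pi ^ 2 * α * (α + 2)) *
        (2 / α + (2 : ℝ) ^ α *
          (Real.Gamma (-α / 2) * Real.Gamma (1 / 2) / Real.Gamma ((1 - α) / 2))) := by
  have hα0 : α ≠ 0 := abs_pos.1 hα
  obtain ⟨hneg, hlt⟩ := abs_lt.1 hα2
  have hode := integral_exp_mul_of_hasDerivAt_hasDerivAt (S := {0, log 2}) (c := 2)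
    (toFinite _).countable continuous_etaLog continuous_etaLogDeriv
    (fun _ ↦ hasDerivAt_etaLog) (fun _ ↦ hasDerivAt_etaLogDeriv)
    etaLog_isBigO_atBot etaLogDeriv_isBigO_atBot etaLog_isBigO_atTop etaLogDeriv_isBigO_atTop
    (by linarith) (by linarith) (integrable_exp_mul_etaLogSource hlt)
  have hbeta : beta (-α / 2) (1 / 2) =
      Gamma (-α / 2) * Gamma (1 / 2) / Gamma ((1 - α) / 2) := by
    rw [beta]
    ring_nf
  rw [integral_exp_mul_etaLogSource hlt hα0, hbeta] at hode
  have hα2' : α + 2 ≠ 0 := by linarith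
  rw [mul_assoc (π ^ 2), ← div_div, div_mul_eq_mul_div, hode,
    mul_div_cancel_left₀ _ (by positivity)]
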